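/- In the Line setting, let nxt be any deterministic adaptive oracle algorithm with input space ({0,1}^u)^v, with query sequence q_1, q_2, … produced by running it with oracle RO on input X. For every j ∈ {1,…,w}, every b ∈ {1,…,p}, every sequence (a_1,…,a_b) ∈ {1,…,v}^b, and every query position t ≥ 1, the probability over uniformly random (RO, X) that q_t = e'_b while q_{t'} ≠ e'_{b−1} for all t' < t is at most 2^(−u), where e'_0,…,e'_b are the branch entries determined by j and (a_1,…,a_b). -/

import Mathlib

/-- Probability of `P` under the uniform distribution on a finite type `Ω`. -/
noncomputable def unifProb {Ω : Type} [Fintype Ω] (P : Ω → Prop) : ℝ :=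
  (Set.ncard {ω : Ω | P ω} : ℝ) / (Fintype.card Ω : ℝ)
/-- Bit strings of length `k`. -/
abbrev Bits (k : ℕ) := Fin k → Bool

/-- The `j`-th bit (`0`-based) of a bit string, `false` out of range. -/
def bitAt {k : ℕ} (y : Bits k) (j : ℕ) : Bool := if h : j < k then y ⟨j, h⟩ else false

/-- The `i`-th block (`0`-based) of the input `X = (x_1, …, x_v)`. -/
def getX {u v : ℕ} (X : Fin v → Bits u) (i : ℕ) : Bits u :=
  if h : i < v then X ⟨i, h⟩ else fun _ => false
/-- The integer encoded by the first `κ` bits of a bit string. -/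
def natOf {n : ℕ} (y : Bits n) (κ : ℕ) : ℕ :=
  ∑ j ∈ Finset.range κ, if bitAt y j then 2 ^ j else 0

/-- `⟨i, x, ρ⟩` : the `n`-bit concatenation of the `W`-bit binary encoding of `i`, the
`u`-bit strings `x` and `ρ`, and trailing zeros. -/
def lineStr (n W u : ℕ) (i : ℕ) (x ρ : Bits u) : Bits n := fun j =>
  if (j : ℕ) < W then Nat.testBit i (j : ℕ)
  else if (j : ℕ) < W + u then bitAt x ((j : ℕ) - W)
  else if (j : ℕ) < W + 2 * u then bitAt ρ ((j : ℕ) - W - u)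
  else false

/-- `lineChain n u v W κ RO X k = (ℓ_{k+1} − 1, r_{k+1})` : the Line chain, with the
pointer stored `0`-based.  `ℓ_1 = 1, r_1 = 0^u`; `e_i = ⟨i, x_{ℓ_i}, r_i⟩`;
`ℓ_{i+1} − 1` is the integer encoded by the first `κ` bits of `RO(e_i)` (reduced mod
`v`, which is the identity when `v = 2^κ`), and `r_{i+1}` is the `u` bits of `RO(e_i)`
in positions `κ+1, …, κ+u`. -/
def lineChain (n u v W κ : ℕ) (RO : Bits n → Bits n) (X : Fin v → Bits u) :
    ℕ → ℕ × Bits u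
  | 0 => (0, fun _ => false)
  | k + 1 =>
    let c := lineChain n u v W κ RO X k
    let e := lineStr n W u (k + 1) (getX X (c.1 % v)) c.2
    (natOf (RO e) κ % v, fun j => bitAt (RO e) (κ + (j : ℕ)))

/-- `lineE n u v W κ RO X k` is the paper's `e_{k+1}`. -/
def lineE (n u v W κ : ℕ) (RO : Bits n → Bits n) (X : Fin v → Bits u) (k : ℕ) : Bits n :=
  lineStr n W u (k + 1) (getX X ((lineChain n u v W κ RO X k).1 % v))
    (lineChain n u v W κ RO X k).2

/-- `branchE n u v W κ RO X j a c` is the branch entry `e'_c` determined by the paper's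
(1-based) index `j` and the (0-based) sequence `a` (only `a 1, …, a c` matter):
`e'_0 = ⟨j+1, x_{ℓ_{j+1}}, r_{j+1}⟩ = e_{j+1}`, and for `c ≥ 1`,
`e'_c = ⟨j+c+1, x_{a_c}, ρ_c⟩` where `ρ_c` is the `u` bits of `RO(e'_{c−1})` in
positions `κ+1, …, κ+u`. -/
def branchE (n u v W κ : ℕ) (RO : Bits n → Bits n) (X : Fin v → Bits u) (j : ℕ)
    (a : ℕ → Fin v) : ℕ → Bits n
  | 0 => lineE n u v W κ RO X j
  | c + 1 => lineStr n W u (j + c + 2) (X (a (c + 1)))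
      (fun t => bitAt (RO (branchE n u v W κ RO X j a c)) (κ + (t : ℕ)))
/-- Answers to the first `t` queries of a deterministic adaptive oracle algorithm whose
next-query function is `f`. -/
def advAns (n : ℕ) (RO : Bits n → Bits n) (f : List (Bits n) → Bits n) : ℕ → List (Bits n)
  | 0 => []
  | t + 1 => advAns n RO f t ++ [RO (f (advAns n RO f t))]

/-- The `(t+1)`-st query (so the paper's `q_{t+1}`) of the adaptive algorithm `f`. -/
def advQ (n : ℕ) (RO : Bits n → Bits n) (f : List (Bits n) → Bits n) (t : ℕ) : Bits n :=
  f (advAns n RO f t)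

/-!
Fix `X`, and let `e` be the point `e'_{b-1}`, regarded as a function of the oracle. Indices strictly
increase along the chain and the branch, and they can be read off the strings, so `e` does not
change when the oracle is altered at `e` itself; hence the answer at `e` may be resampled
independently of everything else without changing the distribution of the oracle. As long as the
algorithm has not queried `e`, its queries do not change under this resampling either, so its guess
is a constant. But `e'_b` contains `u` of the resampled bits, and therefore equals that constant
with probability at most `2^(-u)`.
-/

section UnifProb

open Function
open scoped BigOperators

variable {Ω Ω' : Type} [Fintype Ω] [Fintype Ω']

lemma unifProb_eq_expect (P : Ω → Prop) : unifProb P = 𝔼 ω, {ω | P ω}.indicator (1 : Ω → ℝ) ω := by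
  classical
  simp only [unifProb, Fintype.expect_eq_sum_div_card, Set.indicator_apply, Pi.one_apply,
    Finset.sum_boole, Set.mem_ofPred_eq, Set.ncard_eq_toFinset_card', Set.toFinset_ofPred]

lemma unifProb_mono {P Q : Ω → Prop} (h : ∀ ω, P ω → Q ω) : unifProb P ≤ unifProb Q :=
  div_le_div_of_nonneg_right (Nat.cast_le.2 (Set.ncard_le_ncard h)) (Nat.cast_nonneg _)

lemma unifProb_comp_equiv (σ : Ω ≃ Ω') (P : Ω' → Prop) :
    unifProb (fun ω => P (σ ω)) = unifProb P := by
  simp only [unifProb_eq_expect]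
  exact Fintype.expect_equiv σ _ _ fun _ => rfl

lemma unifProb_prod (P : Ω × Ω' → Prop) :
    unifProb P = 𝔼 ω, unifProb fun ω' => P (ω, ω') := by
  simp only [unifProb_eq_expect]
  exact Finset.expect_product _ _ _

lemma unifProb_comp_fst [Nonempty Ω'] (P : Ω → Prop) :
    unifProb (fun p : Ω × Ω' => P p.1) = unifProb P := by
  rw [← unifProb_comp_equiv (Equiv.prodComm Ω' Ω), unifProb_prod]
  exact Fintype.expect_const (ι := Ω') (unifProb P)

lemma unifProb_prod_le_of_forall_fst [Nonempty Ω] {P : Ω × Ω' → Prop} {δ : ℝ}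
    (h : ∀ ω, unifProb (fun ω' => P (ω, ω')) ≤ δ) : unifProb P ≤ δ :=
  (unifProb_prod P).trans_le (Finset.expect_le Finset.univ_nonempty fun ω _ => h ω)

lemma unifProb_prod_le_of_forall_snd [Nonempty Ω'] {P : Ω × Ω' → Prop} {δ : ℝ}
    (h : ∀ ω', unifProb (fun ω => P (ω, ω')) ≤ δ) : unifProb P ≤ δ :=
  (unifProb_comp_equiv (Equiv.prodComm Ω' Ω) P).symm.trans_le
    (unifProb_prod_le_of_forall_fst h)

variable {α β ι : Type} [DecidableEq α]

/-- The involution exchanging the value of a function `f` at a point `e f` with a fresh value `y`,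
for a point `e` that does not depend on the value of the function there. It is used to resample an
oracle answer without changing the distribution of the oracle. -/
def swapValueAt (e : (α → β) → α) (he : ∀ f y, e (update f (e f) y) = e f) :
    (α → β) × β ≃ (α → β) × β :=
  Involutive.toPerm (fun p => (update p.1 (e p.1) p.2, p.1 (e p.1))) fun p => by simp [he]

variable [Fintype α] [Fintype β]

lemma unifProb_le_of_forall_update [Nonempty β] {e : (α → β) → α}
    (he : ∀ f y, e (update f (e f) y) = e f) {P : (α → β) → Prop} {δ : ℝ}
    (h : ∀ f, unifProb (fun y => P (update f (e f) y)) ≤ δ) : unifProb P ≤ δ :=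
  calc unifProb P
    _ = unifProb (fun p : (α → β) × β => P p.1) := (unifProb_comp_fst P).symm
    _ = unifProb (fun p : (α → β) × β => P (swapValueAt e he p).1) :=
      (unifProb_comp_equiv (swapValueAt e he) fun p => P p.1).symm
    _ ≤ δ := unifProb_prod_le_of_forall_fst h

lemma unifProb_le_of_comp_eq [Fintype ι] [Nonempty β] {s : ι → α} (hs : Injective s)
    {P : (α → β) → Prop} (h : ∀ y y', P y → P y' → y ∘ s = y' ∘ s) :
    unifProb P ≤ 1 / (Fintype.card β : ℝ) ^ Fintype.card ι := by
  have extend_inj : Injective fun p : {y // P y} × (ι → β) => extend s p.2 p.1.1 := by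
    rintro ⟨⟨y, hy⟩, z⟩ ⟨⟨y', hy'⟩, z'⟩ h_extend
    obtain rfl : z = z' := by
      simpa only [extend_comp hs] using congrArg (· ∘ s) h_extend
    obtain rfl : y = y' := by
      funext a
      by_cases ha : ∃ i, s i = a
      · obtain ⟨i, rfl⟩ := ha
        exact congrFun (h y y' hy hy') i
      · simpa only [extend_apply' _ _ _ ha] using congrFun h_extend a
    rfl
  have card_le := Nat.card_le_card_of_injective _ extend_inj
  classical
  rw [Nat.card_prod, Nat.card_eq_fintype_card (α := ι → β), Fintype.card_fun,
    Nat.card_eq_fintype_card (α := α → β)] at card_le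
  rw [unifProb, div_le_div_iff₀ (by exact_mod_cast Fintype.card_pos)
    (pow_pos (by exact_mod_cast Fintype.card_pos) _), one_mul]
  exact_mod_cast card_le

end UnifProb

section Algorithm

open Function

variable {n : ℕ} {f : List (Bits n) → Bits n} {t : ℕ}

lemma advAns_congr {RO RO' : Bits n → Bits n}
    (h : ∀ t' < t, RO' (advQ n RO f t') = RO (advQ n RO f t')) :
    advAns n RO' f t = advAns n RO f t := by
  induction t with
  | zero => rfl
  | succ t ih =>
    have last_answer : RO' (f (advAns n RO f t)) = RO (f (advAns n RO f t)) := h t t.lt_succ_self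
    simp only [advAns, ih fun t' ht' => h t' (ht'.trans t.lt_succ_self), last_answer]

lemma advQ_update_of_forall_ne {RO : Bits n → Bits n} {z y : Bits n}
    (h : ∀ t' < t, advQ n RO f t' ≠ z) : advQ n (update RO z y) f t = advQ n RO f t :=
  congrArg f (advAns_congr fun t' ht' => update_of_ne (h t' ht') _ _)

theorem unifProb_guess_of_forall_ne_le {e : (Bits n → Bits n) → Bits n}
    (he : ∀ RO y, e (update RO (e RO) y) = e RO) {g : Bits n → Bits n} {δ : ℝ}
    (hg : ∀ q, unifProb (fun y => q = g y) ≤ δ) :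
    unifProb (fun RO => advQ n RO f t = g (RO (e RO)) ∧ ∀ t' < t, advQ n RO f t' ≠ e RO) ≤ δ := by
  refine unifProb_le_of_forall_update he fun RO => (unifProb_mono ?_).trans (hg (advQ n RO f t))
  rintro y ⟨guess, unqueried⟩
  rw [he] at guess unqueried
  have query_eq := advQ_update_of_forall_ne (y := RO (e RO)) unqueried
  rw [update_idem, update_eq_self] at query_eq
  rw [query_eq, guess, update_self]

end Algorithm

section Line

variable {n u v W κ : ℕ}

lemma index_eq_of_lineStr_eq (hWn : W ≤ n) {i k : ℕ} (hi : i < 2 ^ W) (hk : k < 2 ^ W)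
    {x ρ x' ρ' : Bits u} (h : lineStr n W u i x ρ = lineStr n W u k x' ρ') : i = k := by
  refine Nat.eq_of_testBit_eq fun m => ?_
  rcases lt_or_ge m W with hm | hm
  · simpa [lineStr, hm] using congrFun h ⟨m, hm.trans_le hWn⟩
  · have le_pow : 2 ^ W ≤ 2 ^ m := Nat.pow_le_pow_right two_pos hm
    rw [Nat.testBit_lt_two_pow (hi.trans_le le_pow), Nat.testBit_lt_two_pow (hk.trans_le le_pow)]

lemma lineStr_injective (hn : W + 2 * u ≤ n) (i : ℕ) (x : Bits u) :
    Function.Injective (lineStr n W u i x) := by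
  intro ρ ρ' h
  funext m
  have h_bit := congrFun h ⟨W + u + m, by omega⟩
  have not_index : ¬ W + u + (m : ℕ) < W := by omega
  have in_range : W + u + (m : ℕ) < W + 2 * u := by omega
  have offset : W + u + (m : ℕ) - W - u = m := by omega
  simpa [lineStr, not_index, in_range, offset, bitAt] using h_bit

lemma unifProb_eq_lineStr_le (hn1 : W + 2 * u ≤ n) (hn2 : κ + u ≤ n) (i : ℕ) (x : Bits u)
    (q : Bits n) :
    unifProb (fun y : Bits n => q = lineStr n W u i x fun m => bitAt y (κ + (m : ℕ))) ≤
      1 / (2 : ℝ) ^ u := by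
  let s : Fin u → Fin n := fun m => ⟨κ + m, by omega⟩
  have hs : Function.Injective s := fun m m' h => by simpa [s, Fin.ext_iff] using h
  have bits_eq (y : Bits n) : (fun m : Fin u => bitAt y (κ + (m : ℕ))) = y ∘ s :=
    funext fun m => dif_pos (s m).2
  simp only [bits_eq]
  simpa using unifProb_le_of_comp_eq hs fun y y' (h : q = lineStr n W u i x (y ∘ s))
    (h' : q = lineStr n W u i x (y' ∘ s)) => lineStr_injective hn1 i x (h.symm.trans h')

lemma lineChain_congr {RO RO' : Bits n → Bits n} (X : Fin v → Bits u) {k : ℕ}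
    (h : ∀ i ≤ k, ∀ x ρ, RO' (lineStr n W u i x ρ) = RO (lineStr n W u i x ρ)) :
    lineChain n u v W κ RO' X k = lineChain n u v W κ RO X k := by
  induction k with
  | zero => rfl
  | succ k ih => simp only [lineChain, ih fun i hi => h i (hi.trans k.le_succ), h (k + 1) le_rfl]

lemma exists_branchE_eq_lineStr (RO : Bits n → Bits n) (X : Fin v → Bits u) (j : ℕ)
    (a : ℕ → Fin v) (c : ℕ) :
    ∃ x ρ, branchE n u v W κ RO X j a c = lineStr n W u (j + c + 1) x ρ := by
  cases c <;> exact ⟨_, _, rfl⟩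

lemma branchE_congr {RO RO' : Bits n → Bits n} (X : Fin v → Bits u) {j : ℕ} (a : ℕ → Fin v) {c : ℕ}
    (h : ∀ i ≤ j + c, ∀ x ρ, RO' (lineStr n W u i x ρ) = RO (lineStr n W u i x ρ)) :
    branchE n u v W κ RO' X j a c = branchE n u v W κ RO X j a c := by
  induction c with
  | zero => simp only [branchE, lineE, lineChain_congr X (k := j) h]
  | succ c ih =>
    obtain ⟨x, ρ, prev_eq⟩ := exists_branchE_eq_lineStr (W := W) (κ := κ) RO X j a c
    simp only [branchE, ih fun i hi => h i (hi.trans (Nat.le_succ _)), prev_eq,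
      h (j + c + 1) le_rfl]

lemma branchE_update_self (hWn : W ≤ n) (X : Fin v → Bits u) {j : ℕ} (a : ℕ → Fin v) {c : ℕ}
    (hc : j + c + 1 < 2 ^ W) (RO : Bits n → Bits n) (y : Bits n) :
    branchE n u v W κ (Function.update RO (branchE n u v W κ RO X j a c) y) X j a c =
      branchE n u v W κ RO X j a c := by
  obtain ⟨x', ρ', e_eq⟩ := exists_branchE_eq_lineStr (W := W) (κ := κ) RO X j a c
  refine branchE_congr X a fun i hi x ρ => Function.update_of_ne ?_ _ _
  rw [e_eq]
  intro h
  have index_eq := index_eq_of_lineStr_eq hWn (by omega) hc h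
  omega

theorem stmt7_general (hn1 : W + 2 * u ≤ n) (hn2 : κ + u ≤ n) (X : Fin v → Bits u)
    (f : List (Bits n) → Bits n) {j c : ℕ} (t : ℕ) (hc : j + c + 1 < 2 ^ W) (a : ℕ → Fin v) :
    unifProb (fun RO : Bits n → Bits n =>
      advQ n RO f t = branchE n u v W κ RO X j a (c + 1) ∧
      ∀ t' < t, advQ n RO f t' ≠ branchE n u v W κ RO X j a c) ≤ 1 / (2 : ℝ) ^ u :=
  unifProb_guess_of_forall_ne_le (e := fun RO => branchE n u v W κ RO X j a c)
    (g := fun y => lineStr n W u (j + c + 2) (X (a (c + 1))) fun m => bitAt y (κ + (m : ℕ)))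
    (branchE_update_self (κ := κ) ((Nat.le_add_right _ _).trans hn1) X a hc)
    (unifProb_eq_lineStr_le hn1 hn2 (j + c + 2) (X (a (c + 1))))

end Line

/-- **Fixed-path guessing claim inside the proof of Lemma 3.3.**
In the Line setting, for any deterministic adaptive oracle algorithm `nxt`, any
`j ∈ {1,…,w}`, `b ∈ {1,…,p}`, sequence `a` and query position `t ≥ 1`, the probability
over uniformly random `(RO, X)` that the `t`-th query equals the branch entry `e'_b`
while no earlier query equals `e'_{b−1}` is at most `2^(−u)`. -/
theorem stmt7 (n u v w κ p W : ℕ)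
    (hu : 1 ≤ u) (hw : 2 ≤ w) (hκ : 1 ≤ κ) (hv : v = 2 ^ κ)
    (hp : p = ⌈(Real.logb 2 w) ^ 2⌉₊) (hW : W = Nat.clog 2 (w + p + 2))
    (hn1 : W + 2 * u ≤ n) (hn2 : κ + u ≤ n)
    (nxt : (Fin v → Bits u) → List (Bits n) → Bits n)
    (j b t : ℕ) (hj1 : 1 ≤ j) (hjw : j ≤ w) (hb1 : 1 ≤ b) (hbp : b ≤ p) (ht : 1 ≤ t)
    (a : ℕ → Fin v) :
    unifProb (fun ω : (Bits n → Bits n) × (Fin v → Bits u) =>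
      advQ n ω.1 (nxt ω.2) (t - 1) = branchE n u v W κ ω.1 ω.2 j a b ∧
      ∀ t' < t - 1, advQ n ω.1 (nxt ω.2) t' ≠ branchE n u v W κ ω.1 ω.2 j a (b - 1)) ≤
    1 / (2 : ℝ) ^ u := by
  obtain ⟨c, rfl⟩ := Nat.exists_eq_add_of_le' hb1
  have index_lt : j + c + 1 < 2 ^ W :=
    hW ▸ (by omega : j + c + 1 < w + p + 2).trans_le (Nat.le_pow_clog one_lt_two _)
  exact unifProb_prod_le_of_forall_snd fun X => stmt7_general hn1 hn2 X (nxt X) (t - 1) index_lt a
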